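/- Let (X, →, *, 1) be a quantum-Wajsberg algebra. The following are equivalent: (a) X is ∨-commutative, i.e., x∨y = y∨x for all x, y ∈ X; (b) x→y = (y∨x)→y and x ≤_Q x∨y, for all x, y ∈ X. -/

import Mathlib

/-- A bounded involutive BE algebra. -/
class InvBE (X : Type*) where
  imp : X → X → X
  one : X
  zero : X
  be1 : ∀ x : X, imp x x = one
  be2 : ∀ x : X, imp x one = one
  be3 : ∀ x : X, imp one x = x
  be4 : ∀ x y z : X, imp x (imp y z) = imp y (imp x z)
  bound : ∀ x : X, imp zero x = one
  dn : ∀ x : X, imp (imp x zero) zero = x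

namespace InvBE

variable {X : Type*} [InvBE X]

/-- Negation: `x* = x → 0`. -/
def neg (x : X) : X := imp x zero

/-- `x ∨ y = (x → y) → y`. -/
def sup (x y : X) : X := imp (imp x y) y

/-- `x ∧ y = ((x* → y*) → y*)*`. -/
def inf (x y : X) : X := neg (imp (imp (neg x) (neg y)) (neg y))

/-- `x ≤ y` iff `x → y = 1`. -/
def le (x y : X) : Prop := imp x y = one

/-- `x ≤_Q y` iff `x = x ∧ y`. -/
def leQ (x y : X) : Prop := x = inf x y

end InvBE

/-!
Since `b ≤ a → b` gives `b ∨ (a → b) = a → b`, the condition `x ≤_Q x ∨ y` already contains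
`b ≤_Q a → b`, and in particular `z* ≤_Q z → x`. With it, `x ≤_Q z` forces `z ∨ x = z`. Hence (b)
yields `y ∨ x = (y → x) → x = ((x ∨ y) → x) → x = (x ∨ y) ∨ x = x ∨ y`.
Conversely, if `∨` is commutative then `x ≤ y` implies `y ∨ x = y`, and dually `x ≤_Q y`; both parts
of (b) are instances of this.
-/

namespace InvBE

variable {X : Type*} [InvBE X] {x y z : X}

theorem neg_neg (x : X) : neg (neg x) = x := dn x

theorem imp_neg_comm (x y : X) : imp x (neg y) = imp y (neg x) := be4 x y zero

theorem neg_imp_neg (x y : X) : imp (neg x) (neg y) = imp y x := by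
  rw [imp_neg_comm, neg_neg]

theorem le_imp_self (x y : X) : le y (imp x y) := by
  rw [le, be4, be1, be2]

theorem le_sup_left (x y : X) : le x (sup x y) := by
  rw [le, sup, be4, be1]

theorem neg_le_neg (h : le x y) : le (neg y) (neg x) := by
  rwa [le, neg_imp_neg]

theorem sup_eq_right_of_le (h : le x y) : sup x y = y := by
  rw [sup, h, be3]

theorem leQ_iff_sup_neg_eq_left : leQ x y ↔ sup (neg x) (neg y) = neg x := by
  change x = neg (sup (neg x) (neg y)) ↔ _
  constructor <;> intro h
  · rw [← neg_neg (sup _ _), ← h]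
  · rw [h, neg_neg]

theorem sup_eq_left_of_le (sup_comm : ∀ x y : X, sup x y = sup y x) (h : le y x) :
    sup x y = x :=
  (sup_comm x y).trans (sup_eq_right_of_le h)

theorem imp_eq_sup_imp (sup_comm : ∀ x y : X, sup x y = sup y x) (x y : X) :
    imp x y = imp (sup y x) y :=
  calc
    imp x y = sup (imp x y) y := (sup_eq_left_of_le sup_comm (le_imp_self x y)).symm
    _ = imp (sup x y) y := rfl
    _ = imp (sup y x) y := by rw [sup_comm]

theorem leQ_of_le (sup_comm : ∀ x y : X, sup x y = sup y x) (h : le x y) : leQ x y :=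
  leQ_iff_sup_neg_eq_left.mpr (sup_eq_left_of_le sup_comm (neg_le_neg h))

theorem leQ_imp_self (leQ_sup : ∀ x y : X, leQ x (sup x y)) (x y : X) : leQ y (imp x y) := by
  have h := leQ_sup y (imp x y)
  rwa [sup_eq_right_of_le (le_imp_self x y)] at h

theorem neg_leQ_imp (leQ_sup : ∀ x y : X, leQ x (sup x y)) (x y : X) :
    leQ (neg x) (imp x y) := by
  rw [← neg_imp_neg y x]
  exact leQ_imp_self leQ_sup (neg y) (neg x)

theorem sup_eq_left_of_leQ (leQ_sup : ∀ x y : X, leQ x (sup x y)) (h : leQ x z) :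
    sup z x = z := by
  have imp_neg_eq : imp (imp z x) (neg z) = neg x := by
    have hxz := leQ_iff_sup_neg_eq_left.mp h
    rwa [sup, neg_imp_neg] at hxz
  have sup_neg_imp_eq : sup z (neg (imp z x)) = z := by
    have hz := leQ_iff_sup_neg_eq_left.mp (neg_leQ_imp leQ_sup z x)
    rwa [neg_neg] at hz
  calc
    sup z x = imp (neg x) (neg (imp z x)) := (neg_imp_neg x (imp z x)).symm
    _ = imp (imp z (neg (imp z x))) (neg (imp z x)) := by rw [← imp_neg_eq, imp_neg_comm z]
    _ = z := sup_neg_imp_eq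

theorem sup_comm_of_imp_eq_of_leQ_sup (imp_eq : ∀ x y : X, imp x y = imp (sup y x) y)
    (leQ_sup : ∀ x y : X, leQ x (sup x y)) (x y : X) : sup x y = sup y x :=
  calc
    sup x y = sup (sup x y) x := (sup_eq_left_of_leQ leQ_sup (leQ_sup x y)).symm
    _ = imp (imp y x) x := by rw [imp_eq y x, sup]
    _ = sup y x := rfl

end InvBE

open InvBE in
theorem stmt_12_general {X : Type*} [InvBE X] :
    (∀ x y : X, sup x y = sup y x) ↔
    (∀ x y : X, imp x y = imp (sup y x) y ∧ leQ x (sup x y)) :=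
  ⟨fun sup_comm x y =>
    ⟨imp_eq_sup_imp sup_comm x y, leQ_of_le sup_comm (le_sup_left x y)⟩,
  fun h => sup_comm_of_imp_eq_of_leQ_sup (fun x y => (h x y).1) (fun x y => (h x y).2)⟩

open InvBE in
theorem stmt_12 {X : Type*} [InvBE X]
    (qw : ∀ x y z : X, imp x (inf (inf x y) (inf z x)) = inf (imp x y) (imp x z)) :
    (∀ x y : X, sup x y = sup y x) ↔
    (∀ x y : X, imp x y = imp (sup y x) y ∧ leQ x (sup x y)) :=
  stmt_12_general
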